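/- arXiv:2408.08783 — 3 statements merged into one kernel-verified Lean document; each statement's English description precedes it below -/
import Mathlib

section
/- Let A₁, B, C, D be real matrices of sizes n₁×n₁, n₁×n₂, n₂×n₁, n₂×n₂, let I denote the n₂×n₂ identity, and suppose the block matrix A = fromBlocks A₁ B C D is invertible. If ε ≥ 0 satisfies ‖B‖ ≤ ε, ‖D − I‖ ≤ ε, and ε·‖A⁻¹‖ ≤ 1/2 (all norms being L∞ operator norms), then A₁ is invertible and ‖A₁⁻¹‖ ≤ 2‖A⁻¹‖. -/
open Matrix

attribute [local instance] Matrix.linftyOpNormedAddCommGroup Matrix.linftyOpNormedRing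

/-!
Deleting the block `B` from `A = fromBlocks A₁ B C D` perturbs `A` by `‖B‖` in norm, so for
`‖B‖ * ‖A⁻¹‖ < 1` a Neumann series shows that the block triangular matrix
`T = fromBlocks A₁ 0 C D`, and hence its diagonal block `A₁`, is invertible. The identity
`T⁻¹ = A⁻¹ + T⁻¹ * (A - T) * A⁻¹` then bounds `‖T⁻¹‖`, and `A₁⁻¹` is a block of `T⁻¹`.
-/

section NormedRing

theorem isUnit_of_norm_sub_mul_norm_inv_lt_one {R : Type*} [NormedRing R]
    [HasSummableGeomSeries R] (u : Rˣ) {y : R} (h : ‖↑u - y‖ * ‖(↑u⁻¹ : R)‖ < 1) : IsUnit y := by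
  have factorization : y = (1 - (↑u - y) * ↑u⁻¹) * ↑u := by
    simp [sub_mul]
  rw [factorization]
  exact (isUnit_one_sub_of_norm_lt_one ((norm_mul_le _ _).trans_lt h)).mul u.isUnit

theorem norm_units_inv_le_div {R : Type*} [SeminormedRing R] (u v : Rˣ)
    (h : ‖(u - v : R)‖ * ‖(↑u⁻¹ : R)‖ < 1) :
    ‖(↑v⁻¹ : R)‖ ≤ ‖(↑u⁻¹ : R)‖ / (1 - ‖(u - v : R)‖ * ‖(↑u⁻¹ : R)‖) := by
  have resolvent : (↑v⁻¹ : R) = ↑u⁻¹ + ↑v⁻¹ * ((u - v) * ↑u⁻¹) := by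
    simp [sub_mul, mul_sub]
  have bound : ‖(↑v⁻¹ : R)‖ ≤ ‖(↑u⁻¹ : R)‖ + ‖(↑v⁻¹ : R)‖ * (‖(u - v : R)‖ * ‖(↑u⁻¹ : R)‖) :=
    calc ‖(↑v⁻¹ : R)‖ = ‖↑u⁻¹ + ↑v⁻¹ * ((u - v) * ↑u⁻¹ : R)‖ := congrArg norm resolvent
      _ ≤ ‖(↑u⁻¹ : R)‖ + ‖↑v⁻¹ * ((u - v) * ↑u⁻¹ : R)‖ := norm_add_le _ _
      _ ≤ ‖(↑u⁻¹ : R)‖ + ‖(↑v⁻¹ : R)‖ * (‖(u - v : R)‖ * ‖(↑u⁻¹ : R)‖) := by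
        gcongr
        exact norm_mul_le_of_le le_rfl (norm_mul_le _ _)
  rw [le_div_iff₀ (sub_pos.2 h)]
  linarith

end NormedRing

section BlockMatrix

variable {m n o p : Type*} [Fintype m] [Fintype n] [Fintype o] [Fintype p]

theorem linfty_opNorm_fromBlocks_zero_left {α : Type*} [NormedAddCommGroup α]
    (B : Matrix m p α) (D : Matrix n p α) :
    ‖fromBlocks (0 : Matrix m o α) B 0 D‖ = max ‖B‖ ‖D‖ := by
  simp [linfty_opNorm_def, ← Finset.univ_disjSum_univ, Finset.sup_disjSum, Finset.sum_disjSum]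

theorem linfty_opNorm_toBlocks₁₁_le {α : Type*} [NormedAddCommGroup α]
    (A : Matrix (m ⊕ n) (o ⊕ p) α) : ‖A.toBlocks₁₁‖ ≤ ‖A‖ := by
  simp only [linfty_opNorm_def, NNReal.coe_le_coe]
  refine Finset.sup_le fun i _ ↦ le_trans ?_ (Finset.le_sup (Finset.mem_univ (Sum.inl i)))
  simp [toBlocks₁₁]

theorem hasSummableGeomSeries_linftyOp (m R : Type*) [Fintype m] [DecidableEq m] [NormedRing R]
    [CompleteSpace R] : HasSummableGeomSeries (Matrix m m R) :=
  -- Instance search misses completeness because the uniformity of the `L∞` operator norm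
  -- is the entrywise one only up to non-reducible unfolding.
  have : @CompleteSpace (Matrix m m R) PseudoMetricSpace.toUniformSpace :=
    inferInstanceAs (CompleteSpace (m → m → R))
  inferInstance

variable [DecidableEq m] [DecidableEq n] {R : Type*} [NormedCommRing R]

theorem linfty_opNorm_inv_le_inv_fromBlocks_zero₁₂ {A : Matrix m m R} {D : Matrix n n R}
    (C : Matrix n m R) (h : IsUnit A ↔ IsUnit D) : ‖A⁻¹‖ ≤ ‖(fromBlocks A 0 C D)⁻¹‖ := by
  rw [inv_fromBlocks_zero₁₂_of_isUnit_iff A C D h]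
  exact linfty_opNorm_toBlocks₁₁_le (fromBlocks A⁻¹ 0 (-(D⁻¹ * C * A⁻¹)) D⁻¹)

theorem isUnit_and_linfty_opNorm_inv_le_div [CompleteSpace R] {A T : Matrix m m R}
    (hA : IsUnit A) (h : ‖A - T‖ * ‖A⁻¹‖ < 1) :
    IsUnit T ∧ ‖T⁻¹‖ ≤ ‖A⁻¹‖ / (1 - ‖A - T‖ * ‖A⁻¹‖) := by
  have := hasSummableGeomSeries_linftyOp m R
  obtain ⟨u, rfl⟩ := hA
  rw [← coe_units_inv] at h ⊢
  obtain ⟨v, rfl⟩ := isUnit_of_norm_sub_mul_norm_inv_lt_one u h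
  rw [← coe_units_inv]
  exact ⟨v.isUnit, norm_units_inv_le_div u v h⟩

theorem compressed_block_isUnit_and_inv_norm_le_general [CompleteSpace R]
    {A₁ : Matrix m m R} {B : Matrix m n R} {C : Matrix n m R} {D : Matrix n n R}
    (hA : IsUnit (fromBlocks A₁ B C D)) (hB : ‖B‖ * ‖(fromBlocks A₁ B C D)⁻¹‖ < 1) :
    IsUnit A₁ ∧
      ‖A₁⁻¹‖ ≤ ‖(fromBlocks A₁ B C D)⁻¹‖ / (1 - ‖B‖ * ‖(fromBlocks A₁ B C D)⁻¹‖) := by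
  have sub_eq : fromBlocks A₁ B C D - fromBlocks A₁ 0 C D = fromBlocks 0 B 0 0 := by
    simp [sub_eq_add_neg, fromBlocks_neg, fromBlocks_add]
  have norm_sub : ‖fromBlocks A₁ B C D - fromBlocks A₁ 0 C D‖ = ‖B‖ := by
    rw [sub_eq, linfty_opNorm_fromBlocks_zero_left, norm_zero, max_eq_left (norm_nonneg B)]
  rw [← norm_sub] at hB ⊢
  obtain ⟨hT, hbound⟩ := isUnit_and_linfty_opNorm_inv_le_div hA hB
  obtain ⟨hA₁, hD⟩ := isUnit_fromBlocks_zero₁₂.1 hT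
  exact ⟨hA₁, (linfty_opNorm_inv_le_inv_fromBlocks_zero₁₂ C (iff_of_true hA₁ hD)).trans hbound⟩

end BlockMatrix

/-- Let `A₁, B, C, D` be real matrices of sizes `n₁ × n₁`, `n₁ × n₂`, `n₂ × n₁`, `n₂ × n₂`, and
suppose the block matrix `A = fromBlocks A₁ B C D` is invertible. If `ε ≥ 0` satisfies
`‖B‖ ≤ ε`, `‖D - 1‖ ≤ ε` and `ε * ‖A⁻¹‖ ≤ 1/2` (L∞ operator norms), then `A₁` is invertible
and `‖A₁⁻¹‖ ≤ 2 * ‖A⁻¹‖`. -/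
theorem compressed_block_isUnit_and_inv_norm_le
    (n₁ n₂ : ℕ)
    (A₁ : Matrix (Fin n₁) (Fin n₁) ℝ) (B : Matrix (Fin n₁) (Fin n₂) ℝ)
    (C : Matrix (Fin n₂) (Fin n₁) ℝ) (D : Matrix (Fin n₂) (Fin n₂) ℝ)
    (hA : IsUnit (Matrix.fromBlocks A₁ B C D))
    (ε : ℝ) (hε : 0 ≤ ε) (hB : ‖B‖ ≤ ε) (hD : ‖D - 1‖ ≤ ε)
    (hsmall : ε * ‖(Matrix.fromBlocks A₁ B C D)⁻¹‖ ≤ 1 / 2) :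
    IsUnit A₁ ∧ ‖A₁⁻¹‖ ≤ 2 * ‖(Matrix.fromBlocks A₁ B C D)⁻¹‖ := by
  have hBsmall : ‖B‖ * ‖(Matrix.fromBlocks A₁ B C D)⁻¹‖ ≤ 1 / 2 := le_trans (by gcongr) hsmall
  obtain ⟨hA₁, hbound⟩ := compressed_block_isUnit_and_inv_norm_le_general hA (by linarith)
  refine ⟨hA₁, hbound.trans ?_⟩
  calc _ ≤ ‖(Matrix.fromBlocks A₁ B C D)⁻¹‖ / (1 / 2) := by gcongr; linarith
    _ = 2 * ‖(Matrix.fromBlocks A₁ B C D)⁻¹‖ := by ring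
end

section
/- Let A₁, B, C, D be real matrices of sizes n₁×n₁, n₁×n₂, n₂×n₁, n₂×n₂, let I denote the n₂×n₂ identity, and suppose the block matrix A = fromBlocks A₁ B C D is invertible. Let K ≥ 1 and δ ≥ 0 satisfy ‖B‖ ≤ K·δ, ‖D − I‖ ≤ K·δ, ‖C‖ ≤ K, and 2K·(2K·‖A⁻¹‖ + 1)·δ ≤ 1 (all norms being L∞ operator norms). Then A₁ is invertible and ‖A⁻¹‖ ≤ 2K·‖A₁⁻¹‖ + 2. -/
open Matrix

attribute [local instance] Matrix.linftyOpNormedAddCommGroup Matrix.linftyOpNormedRing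

/-!
Replacing the right block column `(B, D)` of `A` by `(0, 1)` changes `A` by a matrix `E` whose only
nonzero blocks are `B` and `D - 1`, so `‖A⁻¹‖ * ‖E‖ < 1`. A Neumann series then makes
`T = A - E = fromBlocks A₁ 0 C 1` invertible, and the resolvent identity
`A⁻¹ - T⁻¹ = -(A⁻¹ * E * T⁻¹)` gives `‖A⁻¹‖ ≤ 2 * ‖T⁻¹‖`. The inverse of the block triangular
matrix `T` is explicit, with block rows `(A₁⁻¹, 0)` and `(-(C * A₁⁻¹), 1)`.
-/

section NormedRing

open scoped Ring

variable {R : Type*} [NormedRing R]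

theorem isUnit_of_norm_inverse_mul_norm_sub_lt_one [HasSummableGeomSeries R] {a b : R}
    (ha : IsUnit a) (h : ‖a⁻¹ʳ‖ * ‖a - b‖ < 1) : IsUnit b := by
  have factor : a * (1 - a⁻¹ʳ * (a - b)) = b := by
    rw [mul_sub, mul_one, Ring.mul_inverse_cancel_left _ _ ha, sub_sub_cancel]
  rw [← factor]
  exact ha.mul (isUnit_one_sub_of_norm_lt_one ((norm_mul_le _ _).trans_lt h))

theorem norm_inverse_le_one_add_mul_norm_inverse {a b : R} (h : IsUnit a ↔ IsUnit b) :
    ‖a⁻¹ʳ‖ ≤ (1 + ‖a⁻¹ʳ‖ * ‖a - b‖) * ‖b⁻¹ʳ‖ := by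
  calc ‖a⁻¹ʳ‖
      = ‖b⁻¹ʳ + a⁻¹ʳ * (b - a) * b⁻¹ʳ‖ := by rw [← Ring.inverse_sub_inverse h, add_sub_cancel]
    _ ≤ ‖b⁻¹ʳ‖ + ‖a⁻¹ʳ‖ * ‖b - a‖ * ‖b⁻¹ʳ‖ := norm_add_le_of_le le_rfl norm_mul₃_le
    _ = (1 + ‖a⁻¹ʳ‖ * ‖a - b‖) * ‖b⁻¹ʳ‖ := by rw [norm_sub_rev]; ring

end NormedRing

section LinftyOpNorm

variable {l m n o α : Type*} [Fintype l] [Fintype m] [Fintype n] [Fintype o]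

theorem sum_nnnorm_row_le_linfty_opNNNorm [NormedAddCommGroup α] (A : Matrix m n α) (i : m) :
    ∑ j, ‖A i j‖₊ ≤ ‖A‖₊ := by
  rw [linfty_opNNNorm_def]
  exact Finset.le_sup (f := fun i => ∑ j, ‖A i j‖₊) (Finset.mem_univ i)

theorem linfty_opNNNorm_fromBlocks_le [NormedAddCommGroup α] (A : Matrix l n α)
    (B : Matrix l o α) (C : Matrix m n α) (D : Matrix m o α) :
    ‖fromBlocks A B C D‖₊ ≤ max (‖A‖₊ + ‖B‖₊) (‖C‖₊ + ‖D‖₊) := by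
  rw [linfty_opNNNorm_def]
  refine Finset.sup_le ?_
  rintro (i | i) -
  · rw [Fintype.sum_sum_type]
    exact le_max_of_le_left (add_le_add (sum_nnnorm_row_le_linfty_opNNNorm A i)
      (sum_nnnorm_row_le_linfty_opNNNorm B i))
  · rw [Fintype.sum_sum_type]
    exact le_max_of_le_right (add_le_add (sum_nnnorm_row_le_linfty_opNNNorm C i)
      (sum_nnnorm_row_le_linfty_opNNNorm D i))

theorem linfty_opNorm_fromBlocks_le [NormedAddCommGroup α] (A : Matrix l n α)
    (B : Matrix l o α) (C : Matrix m n α) (D : Matrix m o α) :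
    ‖fromBlocks A B C D‖ ≤ max (‖A‖ + ‖B‖) (‖C‖ + ‖D‖) :=
  mod_cast linfty_opNNNorm_fromBlocks_le A B C D

variable [DecidableEq m] [DecidableEq n]

theorem linfty_opNorm_one_le [NormedRing α] [NormOneClass α] : ‖(1 : Matrix n n α)‖ ≤ 1 := by
  rw [← diagonal_one, linfty_opNorm_diagonal]
  exact (pi_norm_const_le 1).trans_eq norm_one

theorem linfty_opNorm_inv_fromBlocks_zero_one_le [NormedCommRing α] [NormOneClass α]
    {A : Matrix m m α} (hA : IsUnit A) (C : Matrix n m α) :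
    ‖(fromBlocks A 0 C (1 : Matrix n n α))⁻¹‖ ≤ max 1 ‖C‖ * ‖A⁻¹‖ + 1 := by
  have inv_eq : (fromBlocks A 0 C (1 : Matrix n n α))⁻¹ =
      fromBlocks A⁻¹ 0 (-(C * A⁻¹)) 1 := by
    simp [inv_fromBlocks_zero₁₂_of_isUnit_iff A C 1 (iff_of_true hA isUnit_one)]
  have top_le : ‖A⁻¹‖ + ‖(0 : Matrix m n α)‖ ≤ max 1 ‖C‖ * ‖A⁻¹‖ + 1 := by
    rw [norm_zero]
    exact add_le_add (le_mul_of_one_le_left (norm_nonneg _) (le_max_left _ _)) zero_le_one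
  have bottom_le : ‖-(C * A⁻¹)‖ + ‖(1 : Matrix n n α)‖ ≤ max 1 ‖C‖ * ‖A⁻¹‖ + 1 := by
    rw [norm_neg]
    refine add_le_add ((linfty_opNorm_mul _ _).trans ?_) linfty_opNorm_one_le
    gcongr
    exact le_max_right _ _
  rw [inv_eq]
  exact (linfty_opNorm_fromBlocks_le _ _ _ _).trans (max_le top_le bottom_le)

theorem hasSummableGeomSeries_linftyOp_s9 [NormedRing α] [CompleteSpace α] :
    HasSummableGeomSeries (Matrix n n α) :=
  -- `CompleteSpace (Matrix n n α)` would refer to the uniformity `Matrix.instUniformSpace` rather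
  -- than to the one induced by the norm.
  have : @CompleteSpace (Matrix n n α) PseudoMetricSpace.toUniformSpace :=
    inferInstanceAs (CompleteSpace (n → n → α))
  inferInstance

theorem full_inv_norm_le_compressed_inv_norm_general
    [NormedCommRing α] [NormOneClass α] [CompleteSpace α]
    {A₁ : Matrix m m α} {B : Matrix m n α} {C : Matrix n m α} {D : Matrix n n α}
    (hA : IsUnit (fromBlocks A₁ B C D)) {K ε : ℝ} (hK : 1 ≤ K)
    (hB : ‖B‖ ≤ ε) (hD : ‖D - 1‖ ≤ ε) (hC : ‖C‖ ≤ K)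
    (hsmall : ‖(fromBlocks A₁ B C D)⁻¹‖ * ε < 1) :
    IsUnit A₁ ∧ ‖(fromBlocks A₁ B C D)⁻¹‖ ≤ 2 * K * ‖A₁⁻¹‖ + 2 := by
  set A := fromBlocks A₁ B C D with hA_def
  set T := fromBlocks A₁ 0 C (1 : Matrix n n α) with hT_def
  have norm_sub_le_eps : ‖A - T‖ ≤ ε := by
    have sub_eq : A - T = fromBlocks 0 B 0 (D - 1) := by
      simp [hA_def, hT_def, sub_eq_add_neg, fromBlocks_neg, fromBlocks_add]
    rw [sub_eq]
    exact (linfty_opNorm_fromBlocks_le _ _ _ _).trans (max_le (by simpa) (by simpa))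
  have perturbation_lt_one : ‖A⁻¹‖ * ‖A - T‖ < 1 :=
    (mul_le_mul_of_nonneg_left norm_sub_le_eps (norm_nonneg _)).trans_lt hsmall
  have hT : IsUnit T := by
    have := hasSummableGeomSeries_linftyOp_s9 (n := m ⊕ n) (α := α)
    rw [nonsing_inv_eq_ringInverse] at perturbation_lt_one
    exact isUnit_of_norm_inverse_mul_norm_sub_lt_one hA perturbation_lt_one
  have hA₁ : IsUnit A₁ := (isUnit_fromBlocks_zero₁₂.1 hT).1
  refine ⟨hA₁, ?_⟩
  calc ‖A⁻¹‖
      ≤ (1 + ‖A⁻¹‖ * ‖A - T‖) * ‖T⁻¹‖ := by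
        simpa only [nonsing_inv_eq_ringInverse] using
          norm_inverse_le_one_add_mul_norm_inverse (iff_of_true hA hT)
    _ ≤ (1 + 1) * (max 1 ‖C‖ * ‖A₁⁻¹‖ + 1) := by
        gcongr
        exact linfty_opNorm_inv_fromBlocks_zero_one_le hA₁ C
    _ ≤ (1 + 1) * (K * ‖A₁⁻¹‖ + 1) := by
        gcongr
        exact max_le hK hC
    _ = 2 * K * ‖A₁⁻¹‖ + 2 := by ring

end LinftyOpNorm

/-- Let `A₁, B, C, D` be real matrices of sizes `n₁ × n₁`, `n₁ × n₂`, `n₂ × n₁`, `n₂ × n₂`, and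
suppose the block matrix `A = fromBlocks A₁ B C D` is invertible. Let `K ≥ 1` and `δ ≥ 0`
satisfy `‖B‖ ≤ K * δ`, `‖D - 1‖ ≤ K * δ`, `‖C‖ ≤ K` and `2K(2K‖A⁻¹‖ + 1)δ ≤ 1` (L∞ operator
norms). Then `A₁` is invertible and `‖A⁻¹‖ ≤ 2K‖A₁⁻¹‖ + 2`. -/
theorem full_inv_norm_le_compressed_inv_norm
    (n₁ n₂ : ℕ)
    (A₁ : Matrix (Fin n₁) (Fin n₁) ℝ) (B : Matrix (Fin n₁) (Fin n₂) ℝ)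
    (C : Matrix (Fin n₂) (Fin n₁) ℝ) (D : Matrix (Fin n₂) (Fin n₂) ℝ)
    (hA : IsUnit (Matrix.fromBlocks A₁ B C D))
    (K δ : ℝ) (hK : 1 ≤ K) (hδ : 0 ≤ δ)
    (hB : ‖B‖ ≤ K * δ) (hD : ‖D - 1‖ ≤ K * δ) (hC : ‖C‖ ≤ K)
    (hsmall : 2 * K * (2 * K * ‖(Matrix.fromBlocks A₁ B C D)⁻¹‖ + 1) * δ ≤ 1) :
    IsUnit A₁ ∧ ‖(Matrix.fromBlocks A₁ B C D)⁻¹‖ ≤ 2 * K * ‖A₁⁻¹‖ + 2 := by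
  refine full_inv_norm_le_compressed_inv_norm_general hA hK hB hD hC ?_
  have : 0 ≤ ‖(fromBlocks A₁ B C D)⁻¹‖ * (K * δ) := by positivity
  nlinarith
end

section
/- Let A₁, B, C, D be real matrices of sizes n₁×n₁, n₁×n₂, n₂×n₁, n₂×n₂, let I denote the n₂×n₂ identity, and suppose both A = fromBlocks A₁ B C D and A₁ are invertible. Let b₁ ∈ ℝ^{n₁}, d ∈ ℝ^{n₂}, and set α = A⁻¹·(Sum.elim b₁ d), α₁ = A₁⁻¹·b₁, and ᾱ = Sum.elim α₁ (d − C·α₁). Then, with matrix norms the L∞ operator norm and vector norms the sup norm, ‖α − ᾱ‖ ≤ ‖A⁻¹‖ · max(‖B‖, ‖D − I‖) · (‖d‖ + ‖C‖·‖α₁‖). -/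
open Matrix

attribute [local instance] Matrix.linftyOpNormedAddCommGroup Matrix.linftyOpNormedRing

/-!
The vector `ᾱ = (α₁, d - C α₁)` would solve the full system exactly if `B` and `D - 1` vanished.
In general it leaves the residual `-[B; D - 1] (d - C α₁)`, the stacked matrix `[B; D - 1]` has
L∞ operator norm `max ‖B‖ ‖D - 1‖`, and the error is `A⁻¹` applied to the residual.
-/

section

variable {l m n R : Type*} [Fintype m] [Fintype n]

theorem linfty_opNorm_fromRows [Fintype l] [NormedAddCommGroup R] (A : Matrix l n R)
    (B : Matrix m n R) : ‖fromRows A B‖ = max ‖A‖ ‖B‖ := by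
  simp only [linfty_opNorm_def, ← NNReal.coe_max]
  refine congrArg _ (eq_of_forall_ge_iff fun c => ?_)
  simp

theorem fromBlocks_mulVec_sumElim_sub_mulVec [Ring R] [DecidableEq n] (A : Matrix l m R)
    (B : Matrix l n R) (C : Matrix n m R) (D : Matrix n n R) (x : m → R) (d : n → R) :
    fromBlocks A B C D *ᵥ Sum.elim x (d - C *ᵥ x) =
      Sum.elim (A *ᵥ x) d + fromRows B (D - 1) *ᵥ (d - C *ᵥ x) := by
  rw [fromBlocks_mulVec, fromRows_mulVec, ← Sum.elim_add_add, sub_mulVec, one_mulVec]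
  simp only [Sum.elim_comp_inl, Sum.elim_comp_inr]
  congr 1
  abel

variable [NormedCommRing R] [DecidableEq m] [DecidableEq n]

theorem norm_inv_mulVec_sub_le {M : Matrix n n R} (hM : IsUnit M) (b v : n → R) :
    ‖M⁻¹ *ᵥ b - v‖ ≤ ‖M⁻¹‖ * ‖b - M *ᵥ v‖ := by
  have error_eq : M⁻¹ *ᵥ b - v = M⁻¹ *ᵥ (b - M *ᵥ v) := by
    rw [mulVec_sub, mulVec_mulVec, nonsing_inv_mul _ ((isUnit_iff_isUnit_det M).mp hM), one_mulVec]
  rw [error_eq]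
  exact linfty_opNorm_mulVec _ _

theorem coefficient_error_bound_general {A₁ : Matrix m m R} {B : Matrix m n R} {C : Matrix n m R}
    {D : Matrix n n R} (hA : IsUnit (fromBlocks A₁ B C D)) {b₁ α₁ : m → R}
    (hα₁ : A₁ *ᵥ α₁ = b₁) (d : n → R) :
    ‖(fromBlocks A₁ B C D)⁻¹ *ᵥ Sum.elim b₁ d - Sum.elim α₁ (d - C *ᵥ α₁)‖ ≤
      ‖(fromBlocks A₁ B C D)⁻¹‖ * max ‖B‖ ‖D - 1‖ * (‖d‖ + ‖C‖ * ‖α₁‖) := by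
  have residual_eq : Sum.elim b₁ d - fromBlocks A₁ B C D *ᵥ Sum.elim α₁ (d - C *ᵥ α₁) =
      -(fromRows B (D - 1) *ᵥ (d - C *ᵥ α₁)) := by
    rw [fromBlocks_mulVec_sumElim_sub_mulVec, hα₁, sub_add_cancel_left]
  have norm_extension_le : ‖d - C *ᵥ α₁‖ ≤ ‖d‖ + ‖C‖ * ‖α₁‖ :=
    (norm_sub_le _ _).trans (add_le_add_right (linfty_opNorm_mulVec C α₁) _)
  calc
    _ ≤ ‖(fromBlocks A₁ B C D)⁻¹‖ * ‖fromRows B (D - 1) *ᵥ (d - C *ᵥ α₁)‖ := by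
      simpa only [residual_eq, norm_neg] using
        norm_inv_mulVec_sub_le hA (Sum.elim b₁ d) (Sum.elim α₁ (d - C *ᵥ α₁))
    _ ≤ ‖(fromBlocks A₁ B C D)⁻¹‖ * (‖fromRows B (D - 1)‖ * ‖d - C *ᵥ α₁‖) := by
      gcongr
      exact linfty_opNorm_mulVec _ _
    _ ≤ ‖(fromBlocks A₁ B C D)⁻¹‖ * (max ‖B‖ ‖D - 1‖ * (‖d‖ + ‖C‖ * ‖α₁‖)) := by
      rw [linfty_opNorm_fromRows]
      gcongr
    _ = _ := (mul_assoc _ _ _).symm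

end

/-- Let `A₁, B, C, D` be real matrices of sizes `n₁ × n₁`, `n₁ × n₂`, `n₂ × n₁`, `n₂ × n₂`, with
both `A = fromBlocks A₁ B C D` and `A₁` invertible. Let `b₁ ∈ ℝ^{n₁}`, `d ∈ ℝ^{n₂}`, and set
`α = A⁻¹ *ᵥ (Sum.elim b₁ d)`, `α₁ = A₁⁻¹ *ᵥ b₁`, `ᾱ = Sum.elim α₁ (d - C *ᵥ α₁)`. Then, with
matrix norms the L∞ operator norm and vector norms the sup norm,
`‖α - ᾱ‖ ≤ ‖A⁻¹‖ * max ‖B‖ ‖D - 1‖ * (‖d‖ + ‖C‖ * ‖α₁‖)`. -/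
theorem coefficient_error_bound
    (n₁ n₂ : ℕ)
    (A₁ : Matrix (Fin n₁) (Fin n₁) ℝ) (B : Matrix (Fin n₁) (Fin n₂) ℝ)
    (C : Matrix (Fin n₂) (Fin n₁) ℝ) (D : Matrix (Fin n₂) (Fin n₂) ℝ)
    (hA : IsUnit (Matrix.fromBlocks A₁ B C D)) (hA₁ : IsUnit A₁)
    (b₁ : Fin n₁ → ℝ) (d : Fin n₂ → ℝ) :
    ‖(Matrix.fromBlocks A₁ B C D)⁻¹ *ᵥ (Sum.elim b₁ d) -
        Sum.elim (A₁⁻¹ *ᵥ b₁) (d - C *ᵥ (A₁⁻¹ *ᵥ b₁))‖ ≤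
      ‖(Matrix.fromBlocks A₁ B C D)⁻¹‖ * max ‖B‖ ‖D - 1‖ *
        (‖d‖ + ‖C‖ * ‖A₁⁻¹ *ᵥ b₁‖) := by
  have hα₁ : A₁ *ᵥ (A₁⁻¹ *ᵥ b₁) = b₁ := by
    rw [mulVec_mulVec, mul_nonsing_inv _ ((isUnit_iff_isUnit_det A₁).mp hA₁), one_mulVec]
  exact coefficient_error_bound_general hA hα₁ d
end
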